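/- arXiv:1007.1178 — 2 statements merged into one kernel-verified Lean document; each statement's English description precedes it below -/
import Mathlib

section
/- For every integer k ≥ 7, the triangular line graph of the squared k-cycle C_k² is isomorphic to the k-sun S_k. -/
open SimpleGraph

/-- The triangular line graph `T(G)` of a graph `G`: vertices are the edges of `G`,
with two edges adjacent iff they share an endpoint and lie in a common triangle. -/
def TriLine {V : Type*} (G : SimpleGraph V) : SimpleGraph G.edgeSet where
  Adj e₁ e₂ := ∃ u v w : V, G.Adj u v ∧ G.Adj v w ∧ G.Adj u w ∧
      (e₁ : Sym2 V) = s(u, v) ∧ (e₂ : Sym2 V) = s(v, w)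
  symm := by
    constructor
    rintro e₁ e₂ ⟨u, v, w, huv, hvw, huw, h₁, h₂⟩
    exact ⟨w, v, u, hvw.symm, huv.symm, huw.symm, by rw [h₂]; exact Sym2.eq_swap,
      by rw [h₁]; exact Sym2.eq_swap⟩
  loopless := by
    constructor
    rintro e ⟨u, v, w, huv, hvw, huw, h₁, h₂⟩
    rw [h₁, Sym2.eq_iff] at h₂
    rcases h₂ with ⟨h, _⟩ | ⟨h, _⟩
    · exact huv.ne h
    · exact huw.ne h

/-- `H` is a triangular line graph: it is isomorphic to `T(G)` for some finite graph `G`. -/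
def IsTriLineGraph {W : Type*} (H : SimpleGraph W) : Prop :=
  ∃ (V : Type) (_ : Fintype V) (G : SimpleGraph V), Nonempty (TriLine G ≃g H)

/-- Given a preimage `G` of `H` (via the isomorphism `f : T(G) ≃g H`) and a set `S` of
vertices of `H`, this is the subgraph of `G` consisting of the edges of `G` corresponding
to the vertices in `S` (together with their endpoints); i.e. `T⁻¹(S)`. -/
def edgePre {V W : Type*} (G : SimpleGraph V) {H : SimpleGraph W}
    (f : TriLine G ≃g H) (S : Set W) : G.Subgraph where
  verts := {v | ∃ (u : V) (e : G.edgeSet), (e : Sym2 V) = s(v, u) ∧ (f e : W) ∈ S}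
  Adj a b := G.Adj a b ∧ ∃ e : G.edgeSet, (e : Sym2 V) = s(a, b) ∧ (f e : W) ∈ S
  adj_sub h := h.1
  edge_vert := by
    rintro a b ⟨h, e, he, hS⟩
    exact ⟨b, e, he, hS⟩
  symm := by
    constructor
    rintro a b ⟨h, e, he, hS⟩
    exact ⟨h.symm, e, he.trans Sym2.eq_swap, hS⟩

/-- `A` occurs as a (not necessarily induced) subgraph of `B`. -/
def HasSubgraphIso {α β : Type*} (A : SimpleGraph α) (B : SimpleGraph β) : Prop :=
  ∃ f : α → β, Function.Injective f ∧ ∀ a b, A.Adj a b → B.Adj (f a) (f b)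

/-- Glue a graph along an identification relation `R`: the quotient graph on
the quotient of the vertex set by the equivalence generated by `R`. -/
def Glue {ι : Type*} (G : SimpleGraph ι) (R : ι → ι → Prop) :
    SimpleGraph (Quotient (Relation.EqvGen.setoid R)) :=
  SimpleGraph.fromRel (fun x y => ∃ a b : ι, G.Adj a b ∧ x = Quotient.mk _ a ∧ y = Quotient.mk _ b)

/-- The `k`-wheel: a `k`-cycle plus a dominating center vertex (`none`). -/
def wheelGraph (k : ℕ) : SimpleGraph (Option (ZMod k)) :=
  SimpleGraph.fromRel (fun a b =>
    (∃ i : ZMod k, a = some i ∧ b = some (i + 1)) ∨ (a = none ∧ b ≠ none))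

/-- The squared `k`-cycle: a `k`-cycle plus edges between vertices at distance two. -/
def squaredCycleGraph (k : ℕ) : SimpleGraph (ZMod k) :=
  SimpleGraph.fromRel (fun i j => j = i + 1 ∨ j = i + 2)

/-- The `k`-sun: a `k`-cycle (the `Sum.inl` vertices), with a new vertex (`Sum.inr i`)
for each cycle edge `{i, i+1}`, adjacent to both its endpoints. -/
def sunGraph (k : ℕ) : SimpleGraph (ZMod k ⊕ ZMod k) :=
  SimpleGraph.fromRel (fun a b => ∃ i : ZMod k,
    (a = Sum.inl i ∧ b = Sum.inl (i + 1)) ∨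
    (a = Sum.inr i ∧ b = Sum.inl i) ∨
    (a = Sum.inr i ∧ b = Sum.inl (i + 1)))

theorem sq_nz (k : ℕ) (hk : 7 ≤ k) : (1 : ZMod k) ≠ 0 ∧ (2 : ZMod k) ≠ 0 ∧ (3 : ZMod k) ≠ 0 ∧
    (4 : ZMod k) ≠ 0 ∧ (5 : ZMod k) ≠ 0 ∧ (6 : ZMod k) ≠ 0 := by
  have key : ∀ n : ℕ, 0 < n → n < 7 → ((n : ℕ) : ZMod k) ≠ 0 := by
    intro n h0 h7 h
    rw [ZMod.natCast_eq_zero_iff] at h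
    have := Nat.le_of_dvd h0 h
    omega
  refine ⟨?_, ?_, ?_, ?_, ?_, ?_⟩
  · exact_mod_cast key 1 (by norm_num) (by norm_num)
  · exact_mod_cast key 2 (by norm_num) (by norm_num)
  · exact_mod_cast key 3 (by norm_num) (by norm_num)
  · exact_mod_cast key 4 (by norm_num) (by norm_num)
  · exact_mod_cast key 5 (by norm_num) (by norm_num)
  · exact_mod_cast key 6 (by norm_num) (by norm_num)

theorem sq_adj1 (k : ℕ) (hk : 7 ≤ k) (i : ZMod k) : (squaredCycleGraph k).Adj i (i + 1) := by
  obtain ⟨h1, -⟩ := sq_nz k hk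
  simp [squaredCycleGraph, SimpleGraph.fromRel_adj, h1]

theorem sq_adj2 (k : ℕ) (hk : 7 ≤ k) (i : ZMod k) : (squaredCycleGraph k).Adj i (i + 2) := by
  obtain ⟨-, h1, -⟩ := sq_nz k hk
  simp [squaredCycleGraph, SimpleGraph.fromRel_adj, h1]

/-- the edge of the squared cycle that corresponds to a vertex of the sun -/
def sunEdge (k : ℕ) (hk : 7 ≤ k) : ZMod k ⊕ ZMod k → (squaredCycleGraph k).edgeSet
  | Sum.inl i => ⟨s(i, i + 1), sq_adj1 k hk i⟩
  | Sum.inr i => ⟨s(i, i + 2), sq_adj2 k hk i⟩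

theorem sunEdge_inj (k : ℕ) (hk : 7 ≤ k) : Function.Injective (sunEdge k hk) := by
  obtain ⟨h1, h2, h3, h4, h5, h6⟩ := sq_nz k hk
  rintro (i | i) (j | j) h <;> replace h := Sym2.eq_iff.mp (congrArg Subtype.val h) <;>
    rcases h with ⟨ha, hb⟩ | ⟨ha, hb⟩
  · rw [ha]
  · exact absurd (by linear_combination hb - ha) h2
  · exact absurd (by linear_combination ha - hb) h1
  · exact absurd (by linear_combination hb - ha) h3
  · exact absurd (by linear_combination hb - ha) h1
  · exact absurd (by linear_combination hb - ha) h3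
  · rw [ha]
  · exact absurd (by linear_combination hb - ha) h4

theorem sunEdge_surj (k : ℕ) (hk : 7 ≤ k) : Function.Surjective (sunEdge k hk) := by
  rintro ⟨e, he⟩
  induction e using Sym2.ind with
  | _ x y =>
    have he' : (squaredCycleGraph k).Adj x y := he
    simp only [squaredCycleGraph, SimpleGraph.fromRel_adj] at he'
    obtain ⟨-, (h | h) | (h | h)⟩ := he'
    · exact ⟨Sum.inl x, Subtype.ext (by simp [sunEdge, h])⟩
    · exact ⟨Sum.inr x, Subtype.ext (by simp [sunEdge, h])⟩
    · exact ⟨Sum.inl y, Subtype.ext (by simp [sunEdge, h])⟩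
    · exact ⟨Sum.inr y, Subtype.ext (by simp [sunEdge, h])⟩

theorem sq_tri (k : ℕ) (hk : 7 ≤ k) (u v w : ZMod k) (h12 : (squaredCycleGraph k).Adj u v)
    (h23 : (squaredCycleGraph k).Adj v w) (h13 : (squaredCycleGraph k).Adj u w) :
    (v = u + 1 ∧ w = u + 2) ∨ (w = u + 1 ∧ v = u + 2) ∨ (u = v + 1 ∧ w = v + 2) ∨
    (w = v + 1 ∧ u = v + 2) ∨ (u = w + 1 ∧ v = w + 2) ∨ (v = w + 1 ∧ u = w + 2) := by
  obtain ⟨h1, h2, h3, h4, h5, h6⟩ := sq_nz k hk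
  simp only [squaredCycleGraph, SimpleGraph.fromRel_adj] at h12 h23 h13
  obtain ⟨-, h12⟩ := h12
  obtain ⟨-, h23⟩ := h23
  obtain ⟨-, h13⟩ := h13
  rcases h12 with (a | a) | (a | a) <;> rcases h23 with (b | b) | (b | b) <;>
    rcases h13 with (c | c) | (c | c) <;> grind

theorem sunEdge_adj (k : ℕ) (hk : 7 ≤ k) (x y : ZMod k ⊕ ZMod k) :
    (TriLine (squaredCycleGraph k)).Adj (sunEdge k hk x) (sunEdge k hk y) ↔
      (sunGraph k).Adj x y := by
  have A : ∀ i, (squaredCycleGraph k).Adj i (i + 1) := sq_adj1 k hk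
  have B : ∀ i, (squaredCycleGraph k).Adj i (i + 2) := sq_adj2 k hk
  have C : ∀ i, (squaredCycleGraph k).Adj (i + 1) (i + 2) := fun i => by
    have := A (i + 1)
    rwa [show i + 1 + 1 = i + 2 by ring] at this
  constructor
  · intro hadj
    have hne : x ≠ y := fun h => hadj.ne (by rw [h])
    obtain ⟨u, v, w, huv, hvw, huw, e1, e2⟩ := hadj
    have L : ∀ (z : ZMod k ⊕ ZMod k) i, (sunEdge k hk z : Sym2 (ZMod k)) = s(i, i + 1) →
        z = Sum.inl i := fun z i h => sunEdge_inj k hk (Subtype.ext h)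
    have R : ∀ (z : ZMod k ⊕ ZMod k) i, (sunEdge k hk z : Sym2 (ZMod k)) = s(i, i + 2) →
        z = Sum.inr i := fun z i h => sunEdge_inj k hk (Subtype.ext h)
    have L' : ∀ (z : ZMod k ⊕ ZMod k) i, (sunEdge k hk z : Sym2 (ZMod k)) = s(i + 1, i) →
        z = Sum.inl i := fun z i h => L z i (h.trans Sym2.eq_swap)
    have R' : ∀ (z : ZMod k ⊕ ZMod k) i, (sunEdge k hk z : Sym2 (ZMod k)) = s(i + 2, i) →
        z = Sum.inr i := fun z i h => R z i (h.trans Sym2.eq_swap)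
    have M : ∀ (z : ZMod k ⊕ ZMod k) i, (sunEdge k hk z : Sym2 (ZMod k)) = s(i + 1, i + 2) →
        z = Sum.inl (i + 1) := fun z i h =>
          L z (i + 1) (by rw [h, show i + 1 + 1 = i + 2 by ring])
    have M' : ∀ (z : ZMod k ⊕ ZMod k) i, (sunEdge k hk z : Sym2 (ZMod k)) = s(i + 2, i + 1) →
        z = Sum.inl (i + 1) := fun z i h => M z i (h.trans Sym2.eq_swap)
    rw [sunGraph, SimpleGraph.fromRel_adj]
    refine ⟨hne, ?_⟩
    rcases sq_tri k hk u v w huv hvw huw with ⟨rfl, rfl⟩ | ⟨rfl, rfl⟩ | ⟨rfl, rfl⟩ | ⟨rfl, rfl⟩ |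
      ⟨rfl, rfl⟩ | ⟨rfl, rfl⟩
    · exact Or.inl ⟨u, Or.inl ⟨L _ _ e1, M _ _ e2⟩⟩
    · exact Or.inl ⟨u, Or.inr (Or.inr ⟨R _ _ e1, M' _ _ e2⟩)⟩
    · exact Or.inr ⟨v, Or.inr (Or.inl ⟨R _ _ e2, L' _ _ e1⟩)⟩
    · exact Or.inl ⟨v, Or.inr (Or.inl ⟨R' _ _ e1, L _ _ e2⟩)⟩
    · exact Or.inr ⟨w, Or.inr (Or.inr ⟨R' _ _ e2, M _ _ e1⟩)⟩
    · exact Or.inr ⟨w, Or.inl ⟨L' _ _ e2, M' _ _ e1⟩⟩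
  · have key : ∀ x y : ZMod k ⊕ ZMod k, (∃ i : ZMod k,
        (x = Sum.inl i ∧ y = Sum.inl (i + 1)) ∨ (x = Sum.inr i ∧ y = Sum.inl i) ∨
        (x = Sum.inr i ∧ y = Sum.inl (i + 1))) →
        (TriLine (squaredCycleGraph k)).Adj (sunEdge k hk x) (sunEdge k hk y) := by
      rintro x y ⟨i, ⟨rfl, rfl⟩ | ⟨rfl, rfl⟩ | ⟨rfl, rfl⟩⟩
      · exact ⟨i, i + 1, i + 2, A i, C i, B i, rfl, by
          simp only [sunEdge]; rw [show i + 1 + 1 = i + 2 by ring]⟩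
      · exact ⟨i + 2, i, i + 1, (B i).symm, A i, (C i).symm, Sym2.eq_swap, rfl⟩
      · exact ⟨i, i + 2, i + 1, B i, (C i).symm, A i, rfl, by
          simp only [sunEdge]; rw [show i + 1 + 1 = i + 2 by ring]; exact Sym2.eq_swap⟩
    intro h
    rw [sunGraph, SimpleGraph.fromRel_adj] at h
    rcases h.2 with h | h
    · exact key x y h
    · exact (key y x h).symm

/-- For every `k ≥ 7`, the triangular line graph of the squared `k`-cycle is isomorphic
to the `k`-sun. -/
theorem triLine_squaredCycle_iso_sun (k : ℕ) (hk : 7 ≤ k) :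
    Nonempty (TriLine (squaredCycleGraph k) ≃g sunGraph k) := by
  exact ⟨(RelIso.mk (Equiv.ofBijective (sunEdge k hk) ⟨sunEdge_inj k hk, sunEdge_surj k hk⟩)
    (fun {a b} => sunEdge_adj k hk a b) : sunGraph k ≃g TriLine (squaredCycleGraph k)).symm⟩
end

section
/- Let H be the graph obtained from two 7-suns S and S′ by identifying a bowtie of S with a bowtie of S′ via a NOT gadget, and suppose H is a triangular line graph with preimage G. Then the subgraphs T⁻¹(S) and T⁻¹(S′) of G (induced by the edges of G corresponding to the vertices of S and of S′, respectively) are not isomorphic: one is a 7-wheel and the other is a squared 7-cycle. -/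
open SimpleGraph

/-- Vertex type of a 7-sun: `Sum.inl i` are the cycle vertices `cᵢ`, and `Sum.inr i` is
the degree-two vertex `pᵢ` attached to the cycle edge `{cᵢ, cᵢ₊₁}`. -/
abbrev SunV : Type := ZMod 7 ⊕ ZMod 7

/-- Two disjoint copies of the 7-sun: copy `false` is `S` and copy `true` is `S'`. -/
def twoSuns : SimpleGraph (Bool × SunV) :=
  SimpleGraph.fromRel (fun a b => a.1 = b.1 ∧ (sunGraph 7).Adj a.2 b.2)

/-- The NOT-gadget identification between the bowtie `{c₀,c₁,c₂,p₀,p₁}` (center `c₁`) of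
`S` and the bowtie of `S'`: the centers are identified; in one pair of corresponding
triangles the two on-cycle vertices (and the two off-cycle vertices) are identified, and
in the other pair the on-cycle vertex of each sun is identified with the off-cycle vertex
of the other. -/
def notRel : (Bool × SunV) → (Bool × SunV) → Prop := fun x y =>
  (x = (false, Sum.inl 1) ∧ y = (true, Sum.inl 1)) ∨
  (x = (false, Sum.inl 0) ∧ y = (true, Sum.inl 0)) ∨
  (x = (false, Sum.inr 0) ∧ y = (true, Sum.inr 0)) ∨
  (x = (false, Sum.inl 2) ∧ y = (true, Sum.inr 1)) ∨
  (x = (false, Sum.inr 1) ∧ y = (true, Sum.inl 2))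

/-- Two 7-suns glued at a bowtie via the NOT gadget. -/
def notGadget : SimpleGraph (Quotient (Relation.EqvGen.setoid notRel)) :=
  Glue twoSuns notRel

/-- The vertices of the glued graph coming from the copy `c` of the 7-sun. -/
def notSunVerts (c : Bool) : Set (Quotient (Relation.EqvGen.setoid notRel)) :=
  Set.range (fun v : SunV => Quotient.mk _ (c, v))


instance sunDec : DecidableRel (sunGraph 7).Adj := fun a b =>
  decidable_of_iff _ (SimpleGraph.fromRel_adj _ a b).symm

instance twoDec : DecidableRel twoSuns.Adj := fun a b =>
  decidable_of_iff _ (SimpleGraph.fromRel_adj _ a b).symm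

instance wheelDec : DecidableRel (wheelGraph 7).Adj := fun a b =>
  decidable_of_iff _ (SimpleGraph.fromRel_adj _ a b).symm

instance sqDec : DecidableRel (squaredCycleGraph 7).Adj := fun a b =>
  decidable_of_iff _ (SimpleGraph.fromRel_adj _ a b).symm

instance notRelDec : DecidableRel notRel := fun a b => by
  unfold notRel; infer_instance

/-! ### the glued graph -/

def nf (a : Bool × SunV) : Bool × SunV :=
  if a = (true, Sum.inl 1) then (false, Sum.inl 1) else
  if a = (true, Sum.inl 0) then (false, Sum.inl 0) else
  if a = (true, Sum.inr 0) then (false, Sum.inr 0) else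
  if a = (true, Sum.inr 1) then (false, Sum.inl 2) else
  if a = (true, Sum.inl 2) then (false, Sum.inr 1) else a

lemma nf_rel : ∀ a, nf a = a ∨ notRel (nf a) a := by decide +kernel

lemma rel_nf (a b) (h : notRel a b) : nf a = nf b := by
  rcases h with ⟨rfl, rfl⟩ | ⟨rfl, rfl⟩ | ⟨rfl, rfl⟩ | ⟨rfl, rfl⟩ | ⟨rfl, rfl⟩ <;> decide +kernel

lemma mk_eq_iff (a b : Bool × SunV) :
    (Quotient.mk (Relation.EqvGen.setoid notRel) a = Quotient.mk _ b) ↔ nf a = nf b := by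
  constructor
  · intro h
    have h' : Relation.EqvGen notRel a b := Quotient.exact h
    clear h
    induction h' with
    | rel x y h => exact rel_nf _ _ h
    | refl x => rfl
    | symm x y h ih => exact ih.symm
    | trans x y z h1 h2 ih1 ih2 => exact ih1.trans ih2
  · intro h
    have key : ∀ a, Quotient.mk (Relation.EqvGen.setoid notRel) (nf a) = Quotient.mk _ a := by
      intro a
      rcases nf_rel a with h | h
      · rw [h]
      · exact Quotient.sound (Relation.EqvGen.rel _ _ h)
    rw [← key a, ← key b, h]

def reps (a : Bool × SunV) : List (Bool × SunV) :=
  ([(false, Sum.inl 1), (false, Sum.inl 0), (false, Sum.inr 0), (false, Sum.inl 2),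
    (false, Sum.inr 1), (true, Sum.inl 1), (true, Sum.inl 0), (true, Sum.inr 0),
    (true, Sum.inr 1), (true, Sum.inl 2)] : List (Bool × SunV)).filter (fun b => nf a = nf b)

lemma mem_reps' : ∀ a b, nf a = nf b → b = a ∨ ((reps a).any fun d => decide (d = b)) = true := by
  decide +kernel

lemma mem_reps (a b) (h : nf a = nf b) : b = a ∨ b ∈ reps a := by
  rcases mem_reps' a b h with h | h
  · exact Or.inl h
  · obtain ⟨d, hd, e⟩ := List.any_eq_true.1 h
    exact Or.inr (of_decide_eq_true e ▸ hd)

/-- decidable adjacency -/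
def hAdj (a b : Bool × SunV) : Prop :=
  ∃ a' ∈ a :: reps a, ∃ b' ∈ b :: reps b, twoSuns.Adj a' b'

instance hDec : DecidableRel hAdj := fun a b => by unfold hAdj; infer_instance

lemma hAdj_symm {a b} (h : hAdj a b) : hAdj b a := by
  obtain ⟨a', ha, b', hb, h⟩ := h
  exact ⟨b', hb, a', ha, h.symm⟩

lemma hAdj_ne : ∀ a b, hAdj a b → nf a ≠ nf b := by decide +kernel

lemma gadget_adj (a b : Bool × SunV) :
    notGadget.Adj (Quotient.mk _ a) (Quotient.mk _ b) ↔ hAdj a b := by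
  have one : ∀ a b, (∃ a' b' : Bool × SunV, twoSuns.Adj a' b' ∧
      Quotient.mk (Relation.EqvGen.setoid notRel) a = Quotient.mk _ a' ∧
      Quotient.mk (Relation.EqvGen.setoid notRel) b = Quotient.mk _ b') ↔ hAdj a b := by
    intro a b
    constructor
    · rintro ⟨a', b', h, ha, hb⟩
      rw [mk_eq_iff] at ha hb
      exact ⟨a', by simpa using mem_reps a a' ha, b', by simpa using mem_reps b b' hb, h⟩
    · rintro ⟨a', ha, b', hb, h⟩
      refine ⟨a', b', h, ?_, ?_⟩
      · rw [mk_eq_iff]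
        rcases List.mem_cons.1 ha with h | h
        · rw [h]
        · simpa using (List.mem_filter.1 h).2
      · rw [mk_eq_iff]
        rcases List.mem_cons.1 hb with h | h
        · rw [h]
        · simpa using (List.mem_filter.1 h).2
  unfold notGadget Glue
  rw [SimpleGraph.fromRel_adj, one, one]
  constructor
  · rintro ⟨_, h | h⟩
    · exact h
    · exact hAdj_symm h
  · intro h
    exact ⟨fun e => hAdj_ne a b h ((mk_eq_iff a b).1 e), Or.inl h⟩

lemma hAdj_sun : ∀ c : Bool, ∀ a b : SunV, hAdj (c, a) (c, b) ↔ (sunGraph 7).Adj a b := by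
  decide +kernel

lemma nf_inj : ∀ c : Bool, ∀ a b : SunV, nf (c, a) = nf (c, b) → a = b := by
  decide +kernel

lemma hAdj_common : ∀ a b, hAdj a b → ∀ c, hAdj a c → hAdj b c → ∀ d, hAdj a d → hAdj b d →
    nf c = nf d := by
  decide +kernel

lemma gadget_common (x y z w) (h : notGadget.Adj x y) (h1 : notGadget.Adj x z)
    (h2 : notGadget.Adj y z) (h3 : notGadget.Adj x w) (h4 : notGadget.Adj y w) : z = w := by
  induction x using Quotient.inductionOn
  induction y using Quotient.inductionOn
  induction z using Quotient.inductionOn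
  induction w using Quotient.inductionOn
  rw [gadget_adj] at *
  rw [mk_eq_iff]
  exact hAdj_common _ _ h _ h1 h2 _ h3 h4

/-! ### combinatorial core -/

def rv (t : ZMod 7 → Bool) : ℕ → ZMod 7 → ℕ
  | 0, i => i.val
  | n + 1, i => if t i then rv t n (i + 1) else i.val

def rw' (t : ZMod 7 → Bool) (i : ZMod 7) : ℕ := if t i then 7 + i.val else rv t 7 (i + 1)

def ru (t : ZMod 7 → Bool) (i : ZMod 7) : ℕ :=
  if t (i - 1) then rw' t (i - 1) else rv t 7 (i - 1)

def lab (t : ZMod 7 → Bool) (o : Bool) : SunV → ℕ × ℕ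
  | Sum.inl i => if o then (ru t i, rv t 7 i) else (rv t 7 i, ru t i)
  | Sum.inr i => if o then (ru t i, rw' t i) else (rw' t i, ru t i)

def Bad (t : ZMod 7 → Bool) : Prop :=
  (∃ z, (lab t true z).1 = (lab t true z).2) ∨
  ∃ z o z' o', (lab t o z).2 = (lab t o' z').1 ∧ z ≠ z' ∧ ¬ (sunGraph 7).Adj z z' ∧
    ((lab t o z).1 = (lab t o' z').2 ∨
      ∃ y o'', lab t o'' y = ((lab t o z).1, (lab t o' z').2))

instance badDec : DecidablePred Bad := fun t => by unfold Bad; infer_instance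

def mkT (t0 t1 t2 t3 t4 t5 t6 : Bool) : ZMod 7 → Bool :=
  fun i => ([t0, t1, t2, t3, t4, t5, t6] : List Bool).getD i.val true

lemma bad_mk : ∀ t0 t1 t2 t3 t4 t5 t6 : Bool, Bad (mkT t0 t1 t2 t3 t4 t5 t6) ∨
    (∀ i, mkT t0 t1 t2 t3 t4 t5 t6 i = true) ∨ (∀ i, mkT t0 t1 t2 t3 t4 t5 t6 i = false) := by
  decide +kernel

lemma bad_or (t : ZMod 7 → Bool) : Bad t ∨ (∀ i, t i = true) ∨ (∀ i, t i = false) := by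
  have : t = mkT (t 0) (t 1) (t 2) (t 3) (t 4) (t 5) (t 6) := by
    funext i; fin_cases i <;> rfl
  rw [this]
  exact bad_mk _ _ _ _ _ _ _

lemma core {V : Type} (G : SimpleGraph V) (E : SunV → Sym2 V)
    (hE : ∀ z, E z ∈ G.edgeSet) (inj : Function.Injective E)
    (hadj : ∀ z z' u v w, E z = s(u, v) → E z' = s(v, w) → G.Adj u w → (sunGraph 7).Adj z z')
    (htri : ∀ i : ZMod 7, ∃ u v w, E (Sum.inl i) = s(u, v) ∧ E (Sum.inl (i + 1)) = s(v, w) ∧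
      E (Sum.inr i) = s(u, w)) :
    (∃ (v : V) (y : ZMod 7 → V), ∀ i, E (Sum.inl i) = s(v, y i) ∧
      E (Sum.inr i) = s(y i, y (i + 1))) ∨
    (∃ x : ZMod 7 → V, ∀ i, E (Sum.inl i) = s(x i, x (i + 1)) ∧
      E (Sum.inr i) = s(x i, x (i + 2))) := by
  choose u v w h1 h2 h3 using htri
  have step : ∀ i, (v (i + 1) = v i ∧ u (i + 1) = w i) ∨ (v (i + 1) = w i ∧ u (i + 1) = v i) := by
    intro i
    have := (h2 i).symm.trans (h1 (i + 1))
    rw [Sym2.eq_iff] at this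
    rcases this with ⟨a, b⟩ | ⟨a, b⟩
    · exact Or.inr ⟨b.symm, a.symm⟩
    · exact Or.inl ⟨a.symm, b.symm⟩
  classical
  let t : ZMod 7 → Bool := fun i => decide (v (i + 1) = v i ∧ u (i + 1) = w i)
  have ht : ∀ i, t i = true → (v (i + 1) = v i ∧ u (i + 1) = w i) := fun i h => by
    simpa [t] using h
  have hf : ∀ i, t i = false → (v (i + 1) = w i ∧ u (i + 1) = v i) := fun i h => by
    have h' : ¬ (v (i + 1) = v i ∧ u (i + 1) = w i) := by
      simpa only [t, decide_eq_false_iff_not] using h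
    exact (step i).resolve_left h'
  let val : ℕ → V := fun l => if l < 7 then v (l : ZMod 7) else w ((l - 7 : ℕ) : ZMod 7)
  have hval1 : ∀ i : ZMod 7, val i.val = v i := by
    intro i
    have : i.val < 7 := ZMod.val_lt i
    simp [val, this]
  have hval2 : ∀ i : ZMod 7, val (7 + i.val) = w i := by
    intro i
    simp [val]
  have hrv : ∀ n i, val (rv t n i) = v i := by
    intro n
    induction n with
    | zero => intro i; exact hval1 i
    | succ n ih =>
      intro i
      unfold rv
      split_ifs with h
      · rw [ih, (ht i h).1]
      · exact hval1 i
  have hrw : ∀ i, val (rw' t i) = w i := by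
    intro i
    unfold rw'
    split_ifs with h
    · exact hval2 i
    · rw [hrv, (hf i (by simpa using h)).1]
  have hru : ∀ i, val (ru t i) = u i := by
    intro i
    unfold ru
    split_ifs with h
    · rw [hrw]; have := (ht _ h).2; rw [sub_add_cancel] at this; exact this.symm
    · rw [hrv]; have := (hf _ (by simpa using h)).2; rw [sub_add_cancel] at this; exact this.symm
  have hlab : ∀ o z, E z = s(val (lab t o z).1, val (lab t o z).2) := by
    intro o z
    rcases z with i | i <;> cases o <;> simp only [lab, hrv, hrw, hru, if_true, h1, h3] <;>
      simp [hrv, hrw, hru, Sym2.eq_swap]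
  rcases bad_or t with hb | hb | hb
  · exfalso
    rcases hb with ⟨z, hz⟩ | ⟨z, o, z', o', hs, hne, hna, h⟩
    · have := hE z
      rw [hlab true z, hz] at this
      exact G.loopless.irrefl _ this
    · have e1 := hlab o z
      have e2 := hlab o' z'
      rw [← hs] at e2
      rcases h with h | ⟨y, o'', h⟩
      · rw [← h] at e2
        exact hne (inj (e1.trans (Sym2.eq_swap.trans e2.symm)))
      · have e3 := hlab o'' y
        rw [h] at e3
        have := hE y
        rw [e3] at this
        exact hna (hadj z z' _ _ _ e1 e2 this)
  · left
    have hc : ∀ i, v (i + 1) = v i := fun i => (ht i (hb i)).1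
    have hu : ∀ i, u (i + 1) = w i := fun i => (ht i (hb i)).2
    have hv : ∀ i, v i = v 0 := by
      have a1 := hc 0
      have a2 := hc 1
      have a3 := hc 2
      have a4 := hc 3
      have a5 := hc 4
      have a6 := hc 5
      intro i
      fin_cases i
      · rfl
      · exact a1
      · exact a2.trans a1
      · exact a3.trans (a2.trans a1)
      · exact a4.trans (a3.trans (a2.trans a1))
      · exact a5.trans (a4.trans (a3.trans (a2.trans a1)))
      · exact a6.trans (a5.trans (a4.trans (a3.trans (a2.trans a1))))
    refine ⟨v 0, u, fun i => ⟨?_, ?_⟩⟩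
    · rw [h1, hv, Sym2.eq_swap]
    · rw [h3, hu]
  · right
    refine ⟨u, fun i => ⟨?_, ?_⟩⟩
    · rw [h1, (hf i (hb i)).2]
    · have : i + 2 = (i + 1) + 1 := by ring
      rw [h3, this, (hf _ (hb (i + 1))).2, (hf _ (hb i)).1]

lemma strip_inj {V : Type} (x : ZMod 7 → V) (E : SunV → Sym2 V) (inj : Function.Injective E)
    (hd : ∀ z, ¬ (E z).IsDiag)
    (hx : ∀ i, E (Sum.inl i) = s(x i, x (i + 1)) ∧ E (Sum.inr i) = s(x i, x (i + 2))) :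
    Function.Injective x := by
  have k1 : ∀ i, x i ≠ x (i + 1) := fun i h => hd (Sum.inl i) (by rw [(hx i).1, h]; simp)
  have k2 : ∀ i, x i ≠ x (i + 2) := fun i h => hd (Sum.inr i) (by rw [(hx i).2, h]; simp)
  have k3 : ∀ i, x i ≠ x (i + 3) := fun i h => by
    have e1 := (hx i).1
    have e2 := (hx (i + 1)).2
    have : i + 1 + 2 = i + 3 := by ring
    rw [this, ← h, Sym2.eq_swap, ← e1] at e2
    exact absurd (inj e2) (by simp)
  have d : ∀ i j : ZMod 7, i = j ∨ j = i + 1 ∨ j = i + 2 ∨ j = i + 3 ∨ i = j + 1 ∨ i = j + 2 ∨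
      i = j + 3 := by decide
  intro i j h
  rcases d i j with e | e | e | e | e | e | e
  · exact e
  · subst e; exact absurd h (k1 _)
  · subst e; exact absurd h (k2 _)
  · subst e; exact absurd h (k3 _)
  · subst e; exact absurd h.symm (k1 _)
  · subst e; exact absurd h.symm (k2 _)
  · subst e; exact absurd h.symm (k3 _)

lemma build_iso {V A W : Type} (G : SimpleGraph V) {H : SimpleGraph W} (f : TriLine G ≃g H)
    (S : Set W) (K : SimpleGraph A) (φ : A → V) (hφ : Function.Injective φ)
    (hK : ∀ a, ∃ b, K.Adj a b)
    (h : ∀ e : Sym2 V, (∃ e' : G.edgeSet, (e' : Sym2 V) = e ∧ f e' ∈ S) ↔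
      ∃ a b, K.Adj a b ∧ e = s(φ a, φ b)) :
    Nonempty ((edgePre G f S).coe ≃g K) := by
  have hmem : ∀ a, φ a ∈ (edgePre G f S).verts := by
    intro a
    obtain ⟨b, hb⟩ := hK a
    obtain ⟨e', h1, h2⟩ := (h s(φ a, φ b)).2 ⟨a, b, hb, rfl⟩
    exact ⟨φ b, e', h1, h2⟩
  have hbij : Function.Bijective (fun a => (⟨φ a, hmem a⟩ : (edgePre G f S).verts)) := by
    constructor
    · intro a b hab
      exact hφ (congrArg Subtype.val hab)
    · rintro ⟨v, u, e', h1, h2⟩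
      obtain ⟨a, b, hab, he⟩ := (h s(v, u)).1 ⟨e', h1, h2⟩
      rw [Sym2.eq_iff] at he
      rcases he with ⟨he, _⟩ | ⟨he, _⟩
      · exact ⟨a, Subtype.ext he.symm⟩
      · exact ⟨b, Subtype.ext he.symm⟩
  refine ⟨(RelIso.symm ⟨Equiv.ofBijective _ hbij, ?_⟩)⟩
  intro a b
  show (edgePre G f S).Adj (φ a) (φ b) ↔ K.Adj a b
  constructor
  · rintro ⟨_, e', h1, h2⟩
    obtain ⟨a', b', hab, he⟩ := (h s(φ a, φ b)).1 ⟨e', h1, h2⟩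
    rw [Sym2.eq_iff] at he
    rcases he with ⟨p, q⟩ | ⟨p, q⟩
    · rw [hφ p, hφ q]; exact hab
    · rw [hφ p, hφ q]; exact hab.symm
  · intro hab
    obtain ⟨e', h1, h2⟩ := (h s(φ a, φ b)).2 ⟨a, b, hab, rfl⟩
    refine ⟨?_, e', h1, h2⟩
    have := e'.2
    rw [h1] at this
    exact this

lemma wheel_deg : ∀ a, ∃ b, (wheelGraph 7).Adj a b := by decide +kernel
lemma sq_deg : ∀ a, ∃ b, (squaredCycleGraph 7).Adj a b := by decide +kernel
lemma wheel_a1 : ∀ i : ZMod 7, (wheelGraph 7).Adj none (some i) := by decide +kernel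
lemma wheel_a2 : ∀ i : ZMod 7, (wheelGraph 7).Adj (some i) (some (i + 1)) := by decide +kernel
lemma sq_a1 : ∀ i : ZMod 7, (squaredCycleGraph 7).Adj i (i + 1) := by decide +kernel
lemma sq_a2 : ∀ i : ZMod 7, (squaredCycleGraph 7).Adj i (i + 2) := by decide +kernel

section main
variable {V : Type} (G : SimpleGraph V) (f : TriLine G ≃g notGadget)

def EE (c : Bool) (z : SunV) : Sym2 V := (f.symm (Quotient.mk _ (c, z)) : G.edgeSet)

lemma EE_edge (c z) : EE G f c z ∈ G.edgeSet := (f.symm (Quotient.mk _ (c, z))).2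

lemma EE_inj (c) : Function.Injective (EE G f c) := by
  intro a b h
  have := f.symm.injective (Subtype.ext h)
  exact nf_inj c a b ((mk_eq_iff _ _).1 this)

lemma EE_adj (c) (z z') (u v w : V) (h1 : EE G f c z = s(u, v)) (h2 : EE G f c z' = s(v, w))
    (h : G.Adj u w) : (sunGraph 7).Adj z z' := by
  rw [← hAdj_sun c, ← gadget_adj, ← f.symm.map_adj_iff]
  have a1 := EE_edge G f c z
  have a2 := EE_edge G f c z'
  rw [h1] at a1
  rw [h2] at a2
  exact ⟨u, v, w, a1, a2, h, h1, h2⟩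

lemma sun_a1 : ∀ i : ZMod 7, (sunGraph 7).Adj (Sum.inl i) (Sum.inl (i + 1)) := by decide +kernel
lemma sun_a2 : ∀ i : ZMod 7, (sunGraph 7).Adj (Sum.inl i) (Sum.inr i) := by decide +kernel
lemma sun_a3 : ∀ i : ZMod 7, (sunGraph 7).Adj (Sum.inl (i + 1)) (Sum.inr i) := by decide +kernel

lemma tri_common (x y z w) (h : (TriLine G).Adj x y) (h1 : (TriLine G).Adj x z)
    (h2 : (TriLine G).Adj y z) (h3 : (TriLine G).Adj x w) (h4 : (TriLine G).Adj y w)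
    (f : TriLine G ≃g notGadget) : z = w := by
  rw [← f.map_adj_iff] at *
  exact f.injective (gadget_common _ _ _ _ h h1 h2 h3 h4)

lemma EE_tri (c) (i : ZMod 7) : ∃ u v w, EE G f c (Sum.inl i) = s(u, v) ∧
    EE G f c (Sum.inl (i + 1)) = s(v, w) ∧ EE G f c (Sum.inr i) = s(u, w) := by
  have tr : ∀ a b, (sunGraph 7).Adj a b → (TriLine G).Adj (f.symm (Quotient.mk _ (c, a)))
      (f.symm (Quotient.mk _ (c, b))) := by
    intro a b h
    rw [f.symm.map_adj_iff, gadget_adj, hAdj_sun]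
    exact h
  have h := tr _ _ (sun_a1 i)
  have h1 := tr _ _ (sun_a2 i)
  have h2 := tr _ _ (sun_a3 i)
  obtain ⟨u, v, w, huv, hvw, huw, e1, e2⟩ := id h
  refine ⟨u, v, w, e1, e2, ?_⟩
  have := tri_common G _ _ _ (⟨s(u, w), huw⟩ : G.edgeSet) h h1 h2
    ⟨v, u, w, huv.symm, huw, hvw, by rw [e1, Sym2.eq_swap], rfl⟩
    ⟨v, w, u, hvw, huw.symm, huv.symm, e2, Sym2.eq_swap⟩ f
  exact congrArg Subtype.val this

lemma pre_iff (c) (e : Sym2 V) :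
    (∃ e' : G.edgeSet, (e' : Sym2 V) = e ∧ f e' ∈ notSunVerts c) ↔ ∃ z, EE G f c z = e := by
  constructor
  · rintro ⟨e', h1, z, hz⟩
    refine ⟨z, ?_⟩
    rw [← h1]
    unfold EE
    have hz' : Quotient.mk _ (c, z) = f e' := hz
    rw [hz']
    simp
  · rintro ⟨z, hz⟩
    exact ⟨f.symm (Quotient.mk _ (c, z)), hz, z, by simp⟩

lemma EE_diag (c z) : ¬ (EE G f c z).IsDiag := G.not_isDiag_of_mem_edgeSet (EE_edge G f c z)

def IsW (c : Bool) : Prop := ∃ (v : V) (y : ZMod 7 → V), ∀ i, EE G f c (Sum.inl i) = s(v, y i) ∧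
      EE G f c (Sum.inr i) = s(y i, y (i + 1))

def IsQ (c : Bool) : Prop := ∃ x : ZMod 7 → V, ∀ i, EE G f c (Sum.inl i) = s(x i, x (i + 1)) ∧
      EE G f c (Sum.inr i) = s(x i, x (i + 2))

lemma WQ (c) : IsW G f c ∨ IsQ G f c :=
  core G (EE G f c) (EE_edge G f c) (EE_inj G f c) (EE_adj G f c) (EE_tri G f c)

lemma W_iso (c) (h : IsW G f c) :
    Nonempty ((edgePre G f (notSunVerts c)).coe ≃g wheelGraph 7) := by
  obtain ⟨v, y, h⟩ := h
  have hv : ∀ i, v ≠ y i := fun i e => EE_diag G f c (Sum.inl i) (by rw [(h i).1, e]; simp)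
  have hy : Function.Injective y := by
    intro i j e
    have : EE G f c (Sum.inl i) = EE G f c (Sum.inl j) := by rw [(h i).1, (h j).1, e]
    exact Sum.inl_injective (EE_inj G f c this)
  refine build_iso G f _ _ (fun o : Option (ZMod 7) => o.elim v y) ?_ wheel_deg ?_
  · rintro (_ | i) (_ | j) e
    · rfl
    · exact absurd e (hv j)
    · exact absurd e.symm (hv i)
    · exact congrArg some (hy e)
  · intro e
    rw [pre_iff]
    constructor
    · rintro ⟨i | i, rfl⟩
      · exact ⟨none, some i, wheel_a1 i, (h i).1⟩
      · exact ⟨some i, some (i + 1), wheel_a2 i, (h i).2⟩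
    · rintro ⟨a, b, hab, rfl⟩
      obtain ⟨hne, hab⟩ := (SimpleGraph.fromRel_adj _ _ _).1 hab
      rcases hab with (⟨i, rfl, rfl⟩ | ⟨rfl, hb⟩) | (⟨i, rfl, rfl⟩ | ⟨rfl, hb⟩)
      · exact ⟨Sum.inr i, (h i).2⟩
      · obtain ⟨j, rfl⟩ := Option.ne_none_iff_exists'.1 hb
        exact ⟨Sum.inl j, (h j).1⟩
      · exact ⟨Sum.inr i, (h i).2.trans Sym2.eq_swap⟩
      · obtain ⟨j, rfl⟩ := Option.ne_none_iff_exists'.1 hb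
        exact ⟨Sum.inl j, (h j).1.trans Sym2.eq_swap⟩

lemma Q_iso (c) (h : IsQ G f c) :
    Nonempty ((edgePre G f (notSunVerts c)).coe ≃g squaredCycleGraph 7) := by
  obtain ⟨x, h⟩ := h
  have hx := strip_inj x _ (EE_inj G f c) (EE_diag G f c) h
  refine build_iso G f _ _ x hx sq_deg ?_
  intro e
  rw [pre_iff]
  constructor
  · rintro ⟨i | i, rfl⟩
    · exact ⟨i, i + 1, sq_a1 i, (h i).1⟩
    · exact ⟨i, i + 2, sq_a2 i, (h i).2⟩
  · rintro ⟨a, b, hab, rfl⟩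
    obtain ⟨hne, hab⟩ := (SimpleGraph.fromRel_adj _ _ _).1 hab
    rcases hab with (rfl | rfl) | (rfl | rfl)
    · exact ⟨Sum.inl a, (h a).1⟩
    · exact ⟨Sum.inr a, (h a).2⟩
    · exact ⟨Sum.inl b, (h b).1.trans Sym2.eq_swap⟩
    · exact ⟨Sum.inr b, (h b).2.trans Sym2.eq_swap⟩

lemma EE_glue (a b : SunV) (h : nf (false, a) = nf (true, b)) : EE G f false a = EE G f true b := by
  unfold EE
  rw [(mk_eq_iff _ _).2 h]

lemma not_WW (h : IsW G f false) (h' : IsW G f true) : False := by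
  obtain ⟨v, y, h⟩ := h
  obtain ⟨v', y', h'⟩ := h'
  have g0 := EE_glue G f (Sum.inl 0) (Sum.inl 0) (by decide +kernel)
  have g1 := EE_glue G f (Sum.inl 1) (Sum.inl 1) (by decide +kernel)
  have g2 := EE_glue G f (Sum.inr 1) (Sum.inl 2) (by decide +kernel)
  have hv : ∀ i, v ≠ y i := fun i e => EE_diag G f false (Sum.inl i) (by rw [(h i).1, e]; simp)
  have hy : y 0 ≠ y 1 := by
    intro e
    have : EE G f false (Sum.inl 0) = EE G f false (Sum.inl 1) := by rw [(h 0).1, (h 1).1, e]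
    exact absurd (EE_inj G f false this) (by decide)
  rw [(h _).1, (h' _).1] at g0 g1
  rw [(h _).2, (h' _).1] at g2
  have m0 : v' ∈ s(v, y 0) := by rw [g0]; simp
  have m1 : v' ∈ s(v, y 1) := by rw [g1]; simp
  have m2 : v' ∈ s(y 1, y (1 + 1)) := by rw [g2]; simp
  rw [Sym2.mem_iff] at m0 m1 m2
  have e : v' = v := by
    rcases m0 with m0 | m0
    · exact m0
    · rcases m1 with m1 | m1
      · exact m1
      · exact absurd (m0.symm.trans m1) hy
  subst e
  rcases m2 with m | m
  · exact hv _ m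
  · exact hv _ m

lemma not_QQ (h : IsQ G f false) (h' : IsQ G f true) : False := by
  obtain ⟨x, h⟩ := h
  obtain ⟨x', h'⟩ := h'
  have hx := strip_inj x _ (EE_inj G f _) (EE_diag G f _) h
  have hx' := strip_inj x' _ (EE_inj G f _) (EE_diag G f _) h'
  have g0 := EE_glue G f (Sum.inl 0) (Sum.inl 0) (by decide +kernel)
  have g1 := EE_glue G f (Sum.inl 1) (Sum.inl 1) (by decide +kernel)
  have g2 := EE_glue G f (Sum.inl 2) (Sum.inr 1) (by decide +kernel)
  rw [(h _).1, (h' _).1] at g0 g1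
  rw [(h _).1, (h' _).2] at g2
  have m0 : x' 1 ∈ s(x 0, x (0 + 1)) := by rw [g0]; simp
  have m1 : x' 1 ∈ s(x 1, x (1 + 1)) := by rw [g1]; simp
  have m2 : x' 1 ∈ s(x 2, x (2 + 1)) := by rw [g2]; simp
  rw [Sym2.mem_iff] at m0 m1 m2
  rcases m0 with a | a <;> rcases m1 with b | b <;> rcases m2 with d | d
  all_goals first
    | exact absurd (hx (a.symm.trans b)) (by decide)
    | exact absurd (hx (a.symm.trans d)) (by decide)

end main

/-- If two 7-suns `S`, `S'` are joined by a NOT gadget and the resulting graph has a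
triangular line graph preimage `G`, then `T⁻¹(S)` and `T⁻¹(S')` are not isomorphic: one
is a 7-wheel and the other is a squared 7-cycle. -/
theorem notGadget_preimages {V : Type} [Fintype V] (G : SimpleGraph V)
    (f : TriLine G ≃g notGadget) :
    (Nonempty ((edgePre G f (notSunVerts false)).coe ≃g wheelGraph 7) ∧
      Nonempty ((edgePre G f (notSunVerts true)).coe ≃g squaredCycleGraph 7)) ∨
    (Nonempty ((edgePre G f (notSunVerts false)).coe ≃g squaredCycleGraph 7) ∧
      Nonempty ((edgePre G f (notSunVerts true)).coe ≃g wheelGraph 7)) := by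
  rcases WQ G f false with h | h <;> rcases WQ G f true with h' | h'
  · exact (not_WW G f h h').elim
  · exact Or.inl ⟨W_iso G f _ h, Q_iso G f _ h'⟩
  · exact Or.inr ⟨Q_iso G f _ h, W_iso G f _ h'⟩
  · exact (not_QQ G f h h').elim
end
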